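/- Let α ∈ [0,1) and let c_α ∈ (0, π/2] satisfy sin(2c_α)/(2c_α) = α². Assume ‖u⁰‖_∞ ≤ c_α and let Δt > 0. Then the semi-implicit Euler scheme satisfies ‖D^{−α} uⁿ‖_∞ ≤ ‖D^{−α} u⁰‖_∞ for all n ≥ 0. -/

import Mathlib

open Real Matrix

noncomputable section

/-- Mesh size `h = 1/(N+1)`. -/
def hmesh (N : ℕ) : ℝ := 1 / (N + 1)

/-- Grid points `x_i = i·h`, `i = 1,…,N` (here `i : Fin N` corresponds to `i+1`). -/
def gridx (N : ℕ) (i : Fin N) : ℝ := ((i : ℕ) + 1) * hmesh N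

/-- `A = (1/h²)·tridiag(−1,2,−1)`. -/
def matA (N : ℕ) : Matrix (Fin N) (Fin N) ℝ := fun i j =>
  (1 / (hmesh N) ^ 2) *
    (if (i : ℕ) = (j : ℕ) then 2
     else if (i : ℕ) + 1 = (j : ℕ) ∨ (j : ℕ) + 1 = (i : ℕ) then -1 else 0)

/-- `B = (1/(2h))·tridiag(−1,0,1)`. -/
def matB (N : ℕ) : Matrix (Fin N) (Fin N) ℝ := fun i j =>
  (1 / (2 * hmesh N)) *
    (if (i : ℕ) + 1 = (j : ℕ) then 1
     else if (j : ℕ) + 1 = (i : ℕ) then -1 else 0)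

/-- `D = diag(x_1,…,x_N)`. -/
def matD (N : ℕ) : Matrix (Fin N) (Fin N) ℝ := Matrix.diagonal (gridx N)

/-- `D^β = diag(x_1^β,…,x_N^β)` (real powers). -/
def matDpow (N : ℕ) (β : ℝ) : Matrix (Fin N) (Fin N) ℝ :=
  Matrix.diagonal (fun i => gridx N i ^ β)

/-- `C = A − D⁻¹B`. -/
def matC (N : ℕ) : Matrix (Fin N) (Fin N) ℝ :=
  matA N - Matrix.diagonal (fun i => (gridx N i)⁻¹) * matB N

/-- `g(y) = sin(2y)/(2y)` for `y ≠ 0`, `g(0) = 1`. -/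
def gfun (y : ℝ) : ℝ := if y = 0 then 1 else Real.sin (2 * y) / (2 * y)

/-- `G(u) = diag(g(u_1),…,g(u_N))`. -/
def matG {N : ℕ} (u : Fin N → ℝ) : Matrix (Fin N) (Fin N) ℝ :=
  Matrix.diagonal (fun i => gfun (u i))

/-- The matrix `I + Δt(C + G(v)D⁻²)` of the semi-implicit Euler scheme. -/
def stepMat (N : ℕ) (Δt : ℝ) (v : Fin N → ℝ) : Matrix (Fin N) (Fin N) ℝ :=
  1 + Δt • (matC N + matG v * matDpow N (-2))

/-- Operator norm of a matrix induced by the maximum norm on `ℝ^N`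
(the Pi norm on `Fin N → ℝ` is the sup norm). -/
def opNormInf {N : ℕ} (M : Matrix (Fin N) (Fin N) ℝ) : ℝ :=
  ‖(LinearMap.toContinuousLinearMap (Matrix.mulVecLin M) :
      (Fin N → ℝ) →L[ℝ] (Fin N → ℝ))‖

end

/-! ### A binomial-series inequality -/

/-- The real binomial series. -/
theorem hasSum_choose_mul_pow (a : ℝ) {s : ℝ} (hs : |s| < 1) :
    HasSum (fun n : ℕ => Ring.choose a n * s ^ n) ((1 + s) ^ a) := by
  have h := (Real.one_add_rpow_hasFPowerSeriesOnBall_zero (a := a)).hasSum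
    (y := s) (by simpa [enorm_eq_nnnorm, ← NNReal.coe_lt_coe] using hs)
  simpa [binomialSeries, FormalMultilinearSeries.coeff_ofScalars, mul_comm] using h

/-- The absorption identity for generalized binomial coefficients. -/
theorem succ_mul_choose_succ (a : ℝ) (n : ℕ) :
    ((n : ℝ) + 1) * Ring.choose a (n + 1) = Ring.choose a n * (a - n) := by
  have h := Ring.choose_smul_choose a (Nat.le_succ n)
  have h1 : (n + 1 - n : ℕ) = 1 := by omega
  simpa [Nat.choose_succ_self_right, h1] using h

theorem choose_odd_nonneg {a : ℝ} (h0 : 0 ≤ a) (h1 : a ≤ 1) (m : ℕ) :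
    0 ≤ Ring.choose a (2 * m + 1) := by
  induction m with
  | zero => simpa using h0
  | succ m ih =>
    have e1 := succ_mul_choose_succ a (2 * m + 1)
    have e2 := succ_mul_choose_succ a (2 * m + 2)
    have hm : (0 : ℝ) ≤ m := m.cast_nonneg
    push_cast at e1 e2
    have n1 : Ring.choose a (2 * m + 1 + 1) ≤ 0 := by
      have : (2 * (m : ℝ) + 1 + 1) * Ring.choose a (2 * m + 1 + 1) ≤ 0 :=
        e1 ▸ mul_nonpos_of_nonneg_of_nonpos ih (by linarith)
      exact nonpos_of_mul_nonpos_right this (by positivity)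
    have : 0 ≤ (2 * (m : ℝ) + 2 + 1) * Ring.choose a (2 * m + 2 + 1) :=
      e2 ▸ mul_nonneg_of_nonpos_of_nonpos n1 (by linarith)
    exact nonneg_of_mul_nonneg_right this (by positivity)

theorem choose_add_choose_nonpos {a : ℝ} (h0 : 0 ≤ a) (h1 : a ≤ 1) (m : ℕ) :
    Ring.choose (a + 1) (2 * m + 4) + Ring.choose a (2 * m + 4) ≤ 0 := by
  have e := succ_mul_choose_succ a (2 * m + 3)
  have hodd : 0 ≤ Ring.choose a (2 * m + 3) := choose_odd_nonneg h0 h1 (m + 1)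
  have hm : (0 : ℝ) ≤ m := m.cast_nonneg
  rw [show 2 * m + 4 = (2 * m + 3) + 1 from rfl, Ring.choose_succ_succ]
  push_cast at e
  have : (2 * (m : ℝ) + 3 + 1) * (Ring.choose a (2 * m + 3) + Ring.choose a (2 * m + 3 + 1) +
      Ring.choose a (2 * m + 3 + 1)) ≤ 0 := by
    have : Ring.choose a (2 * m + 3) * (2 * (a - 1 - m)) ≤ 0 :=
      mul_nonpos_of_nonneg_of_nonpos hodd (by linarith)
    linarith
  exact nonpos_of_mul_nonpos_right this (by positivity)

theorem weighted_rpow_le_of_lt_one {a s : ℝ} (h0 : 0 ≤ a) (h1 : a ≤ 1) (hs0 : 0 ≤ s)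
    (hs1 : s < 1) :
    (1 + s / 2) * (1 + s) ^ a + (1 - s / 2) * (1 - s) ^ a ≤ 2 + a ^ 2 * s ^ 2 := by
  have hs : |s| < 1 := by rwa [abs_of_nonneg hs0]
  have hs' : |-s| < 1 := by rwa [abs_neg]
  have hsum := ((hasSum_choose_mul_pow (a + 1) hs).add (hasSum_choose_mul_pow a hs)).add
    ((hasSum_choose_mul_pow (a + 1) hs').add (hasSum_choose_mul_pow a hs'))
  let d : ℕ → ℝ := fun n => if n = 0 then 4 else if n = 2 then 2 * a ^ 2 * s ^ 2 else 0
  have hd : HasSum d (∑ n ∈ ({0, 2} : Finset ℕ), d n) := by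
    apply hasSum_sum_of_ne_finset_zero
    intro n hn
    simp only [Finset.mem_insert, Finset.mem_singleton, not_or] at hn
    simp [d, hn.1, hn.2]
  have hle := hasSum_le (fun n => ?_) hsum hd
  · have hd' : ∑ n ∈ ({0, 2} : Finset ℕ), d n = 4 + 2 * a ^ 2 * s ^ 2 := by simp [d]
    rw [hd', rpow_add (by linarith), rpow_add (by linarith), rpow_one, rpow_one,
      ← sub_eq_add_neg] at hle
    linarith
  · obtain ⟨m, rfl | rfl⟩ := n.even_or_odd'
    · rw [(even_two_mul m).neg_pow]
      match m with
      | 0 => norm_num [d]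
      | 1 =>
        have e := succ_mul_choose_succ a 1
        have p := Ring.choose_succ_succ a 1
        norm_num at e p
        norm_num [d]
        rw [p]
        apply le_of_eq
        linear_combination 2 * s ^ 2 * e
      | m + 2 =>
        have hc := choose_add_choose_nonpos h0 h1 m
        have hp : 0 ≤ s ^ (2 * m + 4) := by positivity
        simp only [d, show 2 * (m + 2) = 2 * m + 4 by ring]
        rw [if_neg (by omega), if_neg (by omega)]
        nlinarith [mul_nonpos_of_nonpos_of_nonneg hc hp]
    · rw [(odd_two_mul_add_one m).neg_pow]
      simp only [d]
      rw [if_neg (by omega), if_neg (by omega)]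
      apply le_of_eq
      ring

theorem weighted_rpow_le {a s : ℝ} (h0 : 0 ≤ a) (h1 : a ≤ 1) (hs0 : 0 ≤ s) (hs1 : s ≤ 1) :
    (1 + s / 2) * (1 + s) ^ a + (1 - s / 2) * (1 - s) ^ a ≤ 2 + a ^ 2 * s ^ 2 := by
  have hcl : s ∈ closure (Set.Ico (0 : ℝ) 1) := by
    rw [closure_Ico zero_ne_one]
    exact ⟨hs0, hs1⟩
  have hcont := continuous_rpow_const h0
  refine le_on_closure (f := fun s : ℝ => (1 + s / 2) * (1 + s) ^ a + (1 - s / 2) * (1 - s) ^ a)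
    (g := fun s : ℝ => 2 + a ^ 2 * s ^ 2)
    (fun t ht => weighted_rpow_le_of_lt_one h0 h1 ht.1 ht.2) (Continuous.continuousOn ?_)
    (by fun_prop) hcl
  exact ((by fun_prop : Continuous fun s : ℝ => 1 + s / 2).mul
    (hcont.comp (by fun_prop : Continuous fun s : ℝ => 1 + s))).add
    ((by fun_prop : Continuous fun s : ℝ => 1 - s / 2).mul
      (hcont.comp (by fun_prop : Continuous fun s : ℝ => 1 - s)))

/-! ### A weighted maximum principle -/

theorem abs_le_of_abs_mulVec_le {ι : Type*} [Fintype ι] {M : Matrix ι ι ℝ} {w v : ι → ℝ} {K : ℝ}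
    (hoff : ∀ i j, i ≠ j → M i j ≤ 0) (hw : ∀ i, 0 < w i)
    (hMw : ∀ i, w i ≤ M.mulVec w i) (hMv : ∀ i, |M.mulVec v i| ≤ K * w i) (i : ι) :
    |v i| ≤ K * w i := by
  classical
  have : Nonempty ι := ⟨i⟩
  obtain ⟨k, hk⟩ := Finite.exists_max fun j => |v j| / w j
  set μ := |v k| / w k with hμ
  have hμ0 : 0 ≤ μ := div_nonneg (abs_nonneg _) (hw k).le
  have hv : ∀ j, |v j| ≤ μ * w j := fun j => (div_le_iff₀ (hw j)).1 (hk j)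
  have hvk : |v k| = μ * w k := by rw [hμ, div_mul_cancel₀ _ (hw k).ne']
  have split (z : ι → ℝ) :
      M.mulVec z k = M k k * z k + ∑ j ∈ Finset.univ.erase k, M k j * z j := by
    exact (Finset.add_sum_erase _ (fun j => M k j * z j) (Finset.mem_univ k)).symm
  have hrest : |∑ j ∈ Finset.univ.erase k, M k j * v j| ≤
      -(μ * ∑ j ∈ Finset.univ.erase k, M k j * w j) := by
    rw [Finset.mul_sum, ← Finset.sum_neg_distrib]
    refine (Finset.abs_sum_le_sum_abs _ _).trans (Finset.sum_le_sum fun j hj => ?_)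
    have hneg := hoff k j (Finset.ne_of_mem_erase hj).symm
    rw [abs_mul, abs_of_nonpos hneg]
    nlinarith [mul_le_mul_of_nonneg_left (hv j) (neg_nonneg.2 hneg)]
  have hdiag : M k k * |v k| ≤ |M k k * v k| := by
    rw [abs_mul]
    exact mul_le_mul_of_nonneg_right (le_abs_self _) (abs_nonneg _)
  have htri : |M k k * v k| ≤
      |M.mulVec v k| + |∑ j ∈ Finset.univ.erase k, M k j * v j| := by
    rw [split v]
    simpa using abs_sub (M k k * v k + ∑ j ∈ Finset.univ.erase k, M k j * v j)
      (∑ j ∈ Finset.univ.erase k, M k j * v j)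
  have hmain : μ * M.mulVec w k ≤ K * w k := by
    rw [hvk] at hdiag
    rw [split w]
    linarith [hMv k]
  have hμK : μ ≤ K :=
    le_of_mul_le_mul_right ((mul_le_mul_of_nonneg_left (hMw k) hμ0).trans hmain) (hw k)
  exact (hv i).trans (mul_le_mul_of_nonneg_right hμK (hw i).le)

/-! ### The nonlinearity -/

theorem sq_le_gfun {a c y : ℝ} (ha0 : 0 ≤ a) (ha1 : a ≤ 1) (hc0 : 0 < c) (hc1 : c ≤ π / 2)
    (hc : Real.sin (2 * c) / (2 * c) = a ^ 2) (hy : |y| ≤ c) : a ^ 2 ≤ gfun y := by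
  rw [gfun]
  split_ifs with h
  · exact pow_le_one₀ ha0 ha1
  have heven : Real.sin (2 * y) / (2 * y) = Real.sin (2 * |y|) / (2 * |y|) := by
    rcases abs_choice y with h | h <;> rw [h]
    rw [mul_neg, Real.sin_neg, neg_div_neg_eq]
  have hypos : 0 < |y| := abs_pos.2 h
  rw [heven, le_div_iff₀ (by positivity)]
  have hθ : |y| / c ≤ 1 := (div_le_one hc0).2 hy
  have hcv := strictConcaveOn_sin_Icc.concaveOn.2
    (⟨by positivity, by linarith⟩ : 2 * c ∈ Set.Icc 0 π) (⟨le_rfl, pi_pos.le⟩ : 0 ∈ Set.Icc 0 π)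
    (by positivity : 0 ≤ |y| / c) (sub_nonneg.2 hθ) (add_sub_cancel _ _)
  rw [div_eq_iff (by positivity)] at hc
  simp only [smul_eq_mul, mul_zero, add_zero, Real.sin_zero, hc] at hcv
  rw [show |y| / c * (2 * c) = 2 * |y| by field_simp] at hcv
  calc a ^ 2 * (2 * |y|) = |y| / c * (a ^ 2 * (2 * c)) := by field_simp
    _ ≤ _ := hcv

/-! ### The step matrix -/

theorem hmesh_pos (N : ℕ) : 0 < hmesh N := by
  unfold hmesh
  positivity

theorem gridx_pos {N : ℕ} (i : Fin N) : 0 < gridx N i :=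
  mul_pos (by positivity) (hmesh_pos N)

theorem matC_apply {N : ℕ} (i j : Fin N) :
    matC N i j = 1 / hmesh N ^ 2 * ((if i = j then 2 else 0)
      - (1 + 1 / ((i : ℕ) + 1 : ℝ) / 2) * (if (j : ℕ) = i + 1 then 1 else 0)
      - (1 - 1 / ((i : ℕ) + 1 : ℝ) / 2) * (if (j : ℕ) + 1 = i then 1 else 0)) := by
  have hh := (hmesh_pos N).ne'
  have hi : ((i : ℕ) : ℝ) + 1 ≠ 0 := by positivity
  rw [matC, Matrix.sub_apply, Matrix.diagonal_mul, matA, matB, gridx]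
  simp only [Fin.ext_iff]
  split_ifs <;> first | omega | (field_simp; try ring)

theorem stepMat_apply {N : ℕ} (Δt : ℝ) (v : Fin N → ℝ) (i j : Fin N) :
    stepMat N Δt v i j = (if i = j then 1 else 0) +
      Δt * (matC N i j + if i = j then gfun (v i) * gridx N i ^ (-2 : ℝ) else 0) := by
  simp [stepMat, matG, matDpow, Matrix.one_apply, Matrix.diagonal_apply, mul_add]

theorem one_sub_inv_div_two_nonneg (m : ℕ) : (0 : ℝ) ≤ 1 - 1 / (m + 1) / 2 := by
  have : (1 : ℝ) / (m + 1) ≤ 1 := by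
    rw [div_le_one (by positivity)]
    linarith [m.cast_nonneg (α := ℝ)]
  linarith

theorem stepMat_off_diag_nonpos {N : ℕ} {Δt : ℝ} (hΔt : 0 < Δt) (v : Fin N → ℝ) {i j : Fin N}
    (hij : i ≠ j) : stepMat N Δt v i j ≤ 0 := by
  rw [stepMat_apply, matC_apply, if_neg hij, if_neg hij, if_neg hij, zero_add, add_zero, zero_sub]
  have h1 := one_sub_inv_div_two_nonneg i
  refine mul_nonpos_of_nonneg_of_nonpos hΔt.le
    (mul_nonpos_of_nonneg_of_nonpos (by positivity) ?_)
  have a1 : 0 ≤ (1 + 1 / ((i : ℕ) + 1 : ℝ) / 2) * (if (j : ℕ) = i + 1 then 1 else 0) := by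
    positivity
  have a2 : 0 ≤ (1 - 1 / ((i : ℕ) + 1 : ℝ) / 2) * (if (j : ℕ) + 1 = i then 1 else 0) :=
    mul_nonneg h1 (by positivity)
  linarith

theorem sum_fin_ite_le {N m : ℕ} {p : Fin N → Prop} [DecidablePred p] {f : ℕ → ℝ} (hf : 0 ≤ f m)
    (hp : ∀ j, p j → (j : ℕ) + 1 = m) :
    ∑ j : Fin N, (if p j then 1 else 0) * f (j + 1) ≤ f m := by
  by_cases h : ∃ j, p j
  · obtain ⟨j, hj⟩ := h
    rw [Finset.sum_eq_single j]
    · simp [hj, hp j hj]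
    · intro l _ hl
      have : ¬ p l := fun hpl => hl (Fin.ext (by have := hp l hpl; have := hp j hj; omega))
      simp [this]
    · simp
  · push Not at h
    simpa [h] using hf

theorem le_stepMat_mulVec_rpow {N : ℕ} {Δt a : ℝ} (hΔt : 0 < Δt) (ha0 : 0 ≤ a) (ha1 : a ≤ 1)
    {v : Fin N → ℝ} (i : Fin N) (hg : a ^ 2 ≤ gfun (v i)) :
    gridx N i ^ a ≤ (stepMat N Δt v).mulVec (fun j => gridx N j ^ a) i := by
  have hh := hmesh_pos N
  set h := hmesh N with hdef
  set s : ℝ := 1 / ((i : ℕ) + 1) with hsdef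
  have hk : (0 : ℝ) < (i : ℕ) + 1 := by positivity
  have hs0 : 0 < s := by positivity
  have hs2 : 0 ≤ 1 - s / 2 := one_sub_inv_div_two_nonneg i
  have hs1 : s ≤ 1 := by
    rw [hsdef, div_le_one hk]
    linarith [(i : ℕ).cast_nonneg (α := ℝ)]
  let W : ℕ → ℝ := fun m => (m * h) ^ a
  have hW : ∀ m, 0 ≤ W m := fun m => rpow_nonneg (by positivity) _
  have hgrid : ∀ j : Fin N, gridx N j ^ a = W (j + 1) := fun j => by simp [W, gridx, hdef]
  have hright : W (i + 1 + 1) = W (i + 1) * (1 + s) ^ a := by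
    simp only [W]
    rw [← mul_rpow (by positivity) (by positivity)]
    congr 1
    rw [hsdef]
    push_cast
    field_simp
  have hleft : W i = W (i + 1) * (1 - s) ^ a := by
    simp only [W]
    rw [← mul_rpow (by positivity) (by linarith)]
    congr 1
    rw [hsdef]
    push_cast
    field_simp
    ring
  have hsq : gridx N i ^ (-2 : ℝ) = 1 / h ^ 2 * s ^ 2 := by
    rw [rpow_neg (gridx_pos i).le, rpow_two, gridx, ← hdef, hsdef]
    field_simp
  have expand : (stepMat N Δt v).mulVec (fun j => gridx N j ^ a) i = W (i + 1) +
      Δt * (1 / h ^ 2 * (2 * W (i + 1)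
        - (1 + s / 2) * ∑ j : Fin N, (if (j : ℕ) = i + 1 then 1 else 0) * W (j + 1)
        - (1 - s / 2) * ∑ j : Fin N, (if (j : ℕ) + 1 = i then 1 else 0) * W (j + 1))
        + gfun (v i) * (1 / h ^ 2 * s ^ 2) * W (i + 1)) := by
    have hterm : ∀ j : Fin N, stepMat N Δt v i j * gridx N j ^ a =
        (if i = j then (1 + Δt * (1 / h ^ 2 * 2 + gfun (v i) * (1 / h ^ 2 * s ^ 2))) * W (i + 1)
          else 0)
        - Δt * (1 / h ^ 2) * (1 + s / 2) * ((if (j : ℕ) = i + 1 then 1 else 0) * W (j + 1))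
        - Δt * (1 / h ^ 2) * (1 - s / 2) * ((if (j : ℕ) + 1 = i then 1 else 0) * W (j + 1)) := by
      intro j
      rw [stepMat_apply, matC_apply, hgrid, hsq]
      by_cases hij : i = j
      · subst hij
        simp only [if_true]
        ring
      · simp only [hij, if_false]
        ring
    rw [Matrix.mulVec, dotProduct, Finset.sum_congr rfl fun j _ => hterm j,
      Finset.sum_sub_distrib, Finset.sum_sub_distrib, ← Finset.mul_sum, ← Finset.mul_sum,
      Finset.sum_ite_eq, if_pos (Finset.mem_univ _)]
    ring
  have hR : ∑ j : Fin N, (if (j : ℕ) = i + 1 then 1 else 0) * W (j + 1) ≤ W (i + 1 + 1) :=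
    sum_fin_ite_le (hW _) fun j hj => by omega
  have hL : ∑ j : Fin N, (if (j : ℕ) + 1 = i then 1 else 0) * W (j + 1) ≤ W i :=
    sum_fin_ite_le (hW _) fun j hj => hj
  rw [hright] at hR
  rw [hleft] at hL
  have hR' := mul_le_mul_of_nonneg_left hR (by positivity : 0 ≤ 1 + s / 2)
  have hL' := mul_le_mul_of_nonneg_left hL hs2
  have hG := mul_le_mul_of_nonneg_right hg
    (by have := hW (i + 1); positivity : 0 ≤ s ^ 2 * W (i + 1))
  have hF := mul_le_mul_of_nonneg_left (weighted_rpow_le ha0 ha1 hs0.le hs1) (hW (i + 1))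
  rw [expand, hgrid]
  refine le_add_of_nonneg_right (mul_nonneg hΔt.le ?_)
  rw [mul_comm (gfun (v i)), mul_assoc, mul_assoc, ← mul_add]
  refine mul_nonneg (by positivity) ?_
  linarith

theorem stepMat_max_principle {N : ℕ} {Δt a K : ℝ} (hΔt : 0 < Δt) (ha0 : 0 ≤ a) (ha1 : a ≤ 1)
    {v z : Fin N → ℝ} (hg : ∀ i, a ^ 2 ≤ gfun (v i)) (hz : (stepMat N Δt v).mulVec z = v)
    (hv : ∀ i, |v i| ≤ K * gridx N i ^ a) (i : Fin N) : |z i| ≤ K * gridx N i ^ a :=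
  abs_le_of_abs_mulVec_le (w := fun i => gridx N i ^ a)
    (fun _ _ hij => stepMat_off_diag_nonpos hΔt v hij) (fun i => rpow_pos_of_pos (gridx_pos i) a)
    (fun i => le_stepMat_mulVec_rpow hΔt ha0 ha1 i (hg i)) (fun i => by rw [hz]; exact hv i) i

theorem norm_matDpow_neg_mulVec_le_iff {N : ℕ} {a K : ℝ} (hK : 0 ≤ K) {v : Fin N → ℝ} :
    ‖(matDpow N (-a)).mulVec v‖ ≤ K ↔ ∀ i, |v i| ≤ K * gridx N i ^ a := by
  rw [pi_norm_le_iff_of_nonneg hK]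
  refine forall_congr' fun i => ?_
  have hx := rpow_pos_of_pos (gridx_pos i) a
  rw [matDpow, Matrix.mulVec_diagonal, Real.norm_eq_abs, abs_mul, rpow_neg (gridx_pos i).le,
    abs_of_pos (inv_pos.2 hx), inv_mul_eq_div, div_le_iff₀ hx]

/-- Let `α ∈ [0,1)` and `c_α ∈ (0, π/2]` with `sin(2c_α)/(2c_α) = α²`. If `‖u⁰‖_∞ ≤ c_α`,
then the semi-implicit Euler iterates satisfy `‖D^{−α}uⁿ‖_∞ ≤ ‖D^{−α}u⁰‖_∞` for all `n`. -/
theorem stmt6 {N : ℕ} (hN : 1 ≤ N) (α : ℝ) (hα : α ∈ Set.Ico (0 : ℝ) 1)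
    (cα : ℝ) (hcα : cα ∈ Set.Ioc (0 : ℝ) (π / 2))
    (hceq : Real.sin (2 * cα) / (2 * cα) = α ^ 2)
    (u0 : Fin N → ℝ) (hu0 : ‖u0‖ ≤ cα)
    (Δt : ℝ) (hΔt : 0 < Δt)
    (u : ℕ → Fin N → ℝ) (h0 : u 0 = u0)
    (hrec : ∀ n, (stepMat N Δt (u n)).mulVec (u (n + 1)) = u n) :
    ∀ n, ‖(matDpow N (-α)).mulVec (u n)‖ ≤ ‖(matDpow N (-α)).mulVec u0‖ := by
  have hinv : ∀ n, (∀ i, |u n i| ≤ cα) ∧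
      ∀ i, |u n i| ≤ ‖(matDpow N (-α)).mulVec u0‖ * gridx N i ^ α := by
    intro n
    induction n with
    | zero =>
      rw [h0]
      exact ⟨fun i => (norm_le_pi_norm u0 i).trans hu0,
        (norm_matDpow_neg_mulVec_le_iff (norm_nonneg _)).1 le_rfl⟩
    | succ n ih =>
      have hg : ∀ i, α ^ 2 ≤ gfun (u n i) := fun i =>
        sq_le_gfun hα.1 hα.2.le hcα.1 hcα.2 hceq (ih.1 i)
      have hg0 : ∀ i, (0 : ℝ) ^ 2 ≤ gfun (u n i) := fun i => by
        simpa using (sq_nonneg α).trans (hg i)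
      refine ⟨fun i => ?_, stepMat_max_principle hΔt hα.1 hα.2.le hg (hrec n) ih.2⟩
      simpa using stepMat_max_principle (K := cα) hΔt le_rfl zero_le_one hg0 (hrec n)
        (by simpa using ih.1) i
  exact fun n => (norm_matDpow_neg_mulVec_le_iff (norm_nonneg _)).2 (hinv n).2
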